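/- Let T ⊆ W^{<ℕ}, let α be a countable ordinal, and let X, Y ⊆ W be block subspaces with Y ⊆* X, i.e. all but finitely many terms of the block sequence spanning Y lie in X. Then: (1) if player II has a strategy in the Gowers game G^α_X to play in T, then II has a strategy in G^α_Y to play in T; and (2) if player I has a strategy in the asymptotic game F^α_X to play in T, then I has a strategy in F^α_Y to play in T. -/

import Mathlib

open Filter Topology

namespace Rosendal

variable {𝒲 : Type} [NormedAddCommGroup 𝒲] [NormedSpace ℝ 𝒲]

/-- `(e n)` is a Schauder basis of the Banach space `𝒲`. -/
def IsSchauderBasis (e : ℕ → 𝒲) : Prop :=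
  ∀ x : 𝒲, ∃! a : ℕ → ℝ,
    Tendsto (fun N => ∑ i ∈ Finset.range N, a i • e i) atTop (𝓝 x)

/-- `x` is a linear combination of the vectors `b i`, `i ∈ s`. -/
def SuppIn (b : ℕ → 𝒲) (x : 𝒲) (s : Finset ℕ) : Prop :=
  ∃ a : ℕ → ℝ, x = ∑ i ∈ s, a i • b i

/-- `(x i)_{i<k} ∼_K (y i)_{i<k}`. -/
def SeqEquiv (K : ℝ) (k : ℕ) (x y : ℕ → 𝒲) : Prop :=
  ∀ a : ℕ → ℝ,
    (1 / K) * ‖∑ i ∈ Finset.range k, a i • x i‖ ≤ ‖∑ i ∈ Finset.range k, a i • y i‖ ∧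
    ‖∑ i ∈ Finset.range k, a i • y i‖ ≤ K * ‖∑ i ∈ Finset.range k, a i • x i‖

/-- The outcome `l = (x 0, …, x k)` satisfies `(x 0, …, x k) ∼_K (y 0, …, y k)`. -/
def OutcomeEquiv (K : ℝ) (l : List 𝒲) (y : ℕ → 𝒲) : Prop :=
  SeqEquiv K l.length (fun i => l.getD i 0) y

/-- The outcome `l = (u 0, v 0, u 1, v 1, …, u k, v k)` satisfies
`(u 0, …, u k) ∼_K (v 0, …, v k)`. -/
def PairOutcomeEquiv (K : ℝ) (l : List 𝒲) : Prop :=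
  SeqEquiv K (l.length / 2) (fun i => l.getD (2 * i) 0) (fun i => l.getD (2 * i + 1) 0)

/-- The tree `T((x n), Y, K)`. -/
def embTree (x : ℕ → 𝒲) (Y : Set 𝒲) (K : ℝ) : Set (List 𝒲) :=
  {l | (∀ v ∈ l, v ∈ Y) ∧ SeqEquiv K l.length (fun i => l.getD i 0) x}

open Classical in
/-- The rank of a tree of finite sequences; `⊤ = ∞` if it is ill-founded. -/
noncomputable def treeRank (T : Set (List 𝒲)) : WithTop Ordinal :=
  if h : WellFounded (fun t s : T => s.val <+: t.val ∧ s.val ≠ t.val) then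
    ((⨆ s : T, Order.succ ((h.apply s).rank) : Ordinal) : WithTop Ordinal)
  else ⊤

open Classical in
/-- The embeddability index `Emb((x n), Y) = sup_{K ≥ 1} rank T((x n), Y, K)`. -/
noncomputable def embIndex (x : ℕ → 𝒲) (Y : Set 𝒲) : WithTop Ordinal :=
  if ∃ K : ℝ, 1 ≤ K ∧ treeRank (embTree x Y K) = ⊤ then ⊤
  else ((sSup {o : Ordinal | ∃ K : ℝ, 1 ≤ K ∧
      (o : WithTop Ordinal) = treeRank (embTree x Y K)} : Ordinal) : WithTop Ordinal)

/-- `(I m)` is a sequence of successive nonempty finite intervals `I 0 < I 1 < …` of `ℕ`. -/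
def IntervalSeq (I : ℕ → Finset ℕ) : Prop :=
  (∀ m, ∃ a b : ℕ, a ≤ b ∧ I m = Finset.Icc a b) ∧
  ∀ m, ∀ i ∈ I m, ∀ j ∈ I (m + 1), i < j

/-- The setting of Section 2 of the paper: a Banach space `𝒲` with a Schauder basis
`(e n)`, a countable subfield `𝔽 ⊆ ℝ` closed under the norms of finite `𝔽`-linear
combinations of the basis, and the countable `𝔽`-vector space `W` spanned by `(e n)`. -/
structure Frame (𝒲 : Type) [NormedAddCommGroup 𝒲] [NormedSpace ℝ 𝒲] : Type where
  e : ℕ → 𝒲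
  complete : CompleteSpace 𝒲
  basis : IsSchauderBasis e
  𝔽 : Subfield ℝ
  countable : (𝔽 : Set ℝ).Countable
  norm_mem : ∀ (s : Finset ℕ) (a : ℕ → ℝ), (∀ i ∈ s, a i ∈ 𝔽) →
    ‖∑ i ∈ s, a i • e i‖ ∈ 𝔽

namespace Frame

variable {𝒲 : Type} [NormedAddCommGroup 𝒲] [NormedSpace ℝ 𝒲] (ctx : Frame 𝒲)

/-- The `𝔽`-linear span of a set of vectors. -/
def fspan (S : Set 𝒲) : Set 𝒲 :=
  {v | ∃ t : Finset 𝒲, ↑t ⊆ S ∧ ∃ c : 𝒲 → ℝ, (∀ w, c w ∈ ctx.𝔽) ∧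
    v = ∑ w ∈ t, c w • w}

/-- The countable `𝔽`-vector space `W` with basis `(e n)`. -/
def W : Set 𝒲 := ctx.fspan (Set.range ctx.e)

/-- `(y n)` is a block sequence with respect to the reference block basis `(b n)`:
a sequence of nonzero vectors of the `𝔽`-span of `(b n)` with successive supports. -/
def BlockSeqRel (b y : ℕ → 𝒲) : Prop :=
  (∀ n, y n ∈ ctx.fspan (Set.range b)) ∧ (∀ n, y n ≠ 0) ∧
  ∃ D : ℕ → Finset ℕ, (∀ n, SuppIn b (y n) (D n)) ∧
    ∀ n, ∀ i ∈ D n, ∀ j ∈ D (n + 1), i < j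

/-- `(y n)` is a block sequence (with respect to the basis `(e n)` of `W`). -/
def IsBlockSeq (y : ℕ → 𝒲) : Prop := ctx.BlockSeqRel ctx.e y

/-- `Y` is a block subspace of `X`: the `𝔽`-span of an infinite block sequence of
vectors of `X`. -/
def IsBlockSubspaceOf (Y X : Set 𝒲) : Prop :=
  ∃ y : ℕ → 𝒲, ctx.IsBlockSeq y ∧ (∀ n, y n ∈ X) ∧ Y = ctx.fspan (Set.range y)

/-- `Y` is a block subspace of `W`. -/
def IsBlockSubspace (Y : Set 𝒲) : Prop := ctx.IsBlockSubspaceOf Y ctx.W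

/-- `F` is a finite-dimensional `𝔽`-subspace of `X`. -/
def IsFinDimIn (F X : Set 𝒲) : Prop :=
  ∃ t : Finset 𝒲, ↑t ⊆ X ∧ F = ctx.fspan ↑t

/-- `n < F`: every vector of `F` is supported on basis vectors of index `> n`. -/
def NatLt (n : ℕ) (F : Set 𝒲) : Prop :=
  ∀ x ∈ F, ∃ s : Finset ℕ, SuppIn ctx.e x s ∧ ∀ i ∈ s, n < i

/-- `V` is an `𝔽`-subspace of `𝒲`. -/
def IsSubspace (V : Set 𝒲) : Prop :=
  (0 : 𝒲) ∈ V ∧ (∀ u v : 𝒲, u ∈ V → v ∈ V → u + v ∈ V) ∧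
    ∀ c : ℝ, c ∈ ctx.𝔽 → ∀ v ∈ V, c • v ∈ V

/-- `V` is infinite-dimensional (not contained in a finitely generated subspace). -/
def IsInfDim (V : Set 𝒲) : Prop :=
  ¬∃ t : Finset 𝒲, V ⊆ ctx.fspan ↑t

/-- Game values of the asymptotic game `F^β_X`, for player II, computed by transfinite
recursion on the ordinal bound.  `IIWinsF X S β Facc vec` states: in the asymptotic game
below `X`, from a position where the vectors `vec` have been played and the
finite-dimensional subspaces played by II span `Facc`, and where I must now play a natural
number together with an ordinal `< β`, player II has a strategy so that the final outcome
lies in `S`. -/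
noncomputable def IIWinsF (X : Set 𝒲) (S : Set (List 𝒲)) :
    Ordinal → Set 𝒲 → List 𝒲 → Prop :=
  WellFounded.fix (C := fun _ : Ordinal => Set 𝒲 → List 𝒲 → Prop) Ordinal.lt_wf
    (fun β ih Facc vec =>
      ∀ n : ℕ, ∀ ξ : Ordinal, ∀ hξ : ξ < β,
        ∃ F : Set 𝒲, ctx.IsFinDimIn F X ∧ ctx.NatLt n F ∧
          ∃ x : 𝒲, x ≠ 0 ∧ x ∈ ctx.fspan (Facc ∪ F) ∧
            (ξ = 0 → vec ++ [x] ∈ S) ∧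
            (ξ ≠ 0 → ih ξ hξ (ctx.fspan (Facc ∪ F)) (vec ++ [x])))

/-- Player II has a strategy in the asymptotic game `F^β_X` to play an outcome in `S`. -/
noncomputable def IIStratF (X : Set 𝒲) (β : Ordinal) (S : Set (List 𝒲)) : Prop :=
  (β = 0 → ([] : List 𝒲) ∈ S) ∧ (β ≠ 0 → ctx.IIWinsF X S β (ctx.fspan ∅) [])

/-- Game values of the asymptotic game `F^β_X` for player I (who plays the integers and
the ordinals, trying to steer the outcome into `S`). -/
noncomputable def IWinsF (X : Set 𝒲) (S : Set (List 𝒲)) :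
    Ordinal → Set 𝒲 → List 𝒲 → Prop :=
  WellFounded.fix (C := fun _ : Ordinal => Set 𝒲 → List 𝒲 → Prop) Ordinal.lt_wf
    (fun β ih Facc vec =>
      ∃ n : ℕ, ∃ ξ : Ordinal, ∃ hξ : ξ < β,
        ∀ F : Set 𝒲, ctx.IsFinDimIn F X → ctx.NatLt n F →
        ∀ x : 𝒲, x ≠ 0 → x ∈ ctx.fspan (Facc ∪ F) →
          (ξ = 0 → vec ++ [x] ∈ S) ∧
          (ξ ≠ 0 → ih ξ hξ (ctx.fspan (Facc ∪ F)) (vec ++ [x])))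

/-- Player I has a strategy in the asymptotic game `F^β_X` to play an outcome in `S`. -/
noncomputable def IStratF (X : Set 𝒲) (β : Ordinal) (S : Set (List 𝒲)) : Prop :=
  (β = 0 → ([] : List 𝒲) ∈ S) ∧ (β ≠ 0 → ctx.IWinsF X S β (ctx.fspan ∅) [])

/-- Game values of the Gowers game `G^α_X` for player II. -/
noncomputable def IIWinsG (X : Set 𝒲) (S : Set (List 𝒲)) :
    Ordinal → Set 𝒲 → List 𝒲 → Prop :=
  WellFounded.fix (C := fun _ : Ordinal => Set 𝒲 → List 𝒲 → Prop) Ordinal.lt_wf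
    (fun α ih Facc vec =>
      ∀ Y : Set 𝒲, ctx.IsBlockSubspaceOf Y X →
      ∀ ξ : Ordinal, ∀ hξ : ξ < α,
        ∃ F : Set 𝒲, ctx.IsFinDimIn F Y ∧
          ∃ x : 𝒲, x ≠ 0 ∧ x ∈ ctx.fspan (Facc ∪ F) ∧
            (ξ = 0 → vec ++ [x] ∈ S) ∧
            (ξ ≠ 0 → ih ξ hξ (ctx.fspan (Facc ∪ F)) (vec ++ [x])))

/-- Player II has a strategy in the generalised Gowers game `G^α_X` to play in `S`. -/
noncomputable def IIStratG (X : Set 𝒲) (α : Ordinal) (S : Set (List 𝒲)) : Prop :=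
  (α = 0 → ([] : List 𝒲) ∈ S) ∧ (α ≠ 0 → ctx.IIWinsG X S α (ctx.fspan ∅) [])

/-- Game values of the adversarial game `A^α_X` for player II (who plays the integers,
the finite-dimensional subspaces `F_l ⊆ Y_l` and the vectors `y_l`). -/
noncomputable def IIWinsA (X : Set 𝒲) (S : Set (List 𝒲)) :
    Ordinal → Set 𝒲 → Set 𝒲 → List 𝒲 → Prop :=
  WellFounded.fix (C := fun _ : Ordinal => Set 𝒲 → Set 𝒲 → List 𝒲 → Prop)
    Ordinal.lt_wf
    (fun α ih Eacc Facc vec =>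
      ∃ n : ℕ,
        ∀ E : Set 𝒲, ctx.IsFinDimIn E X → ctx.NatLt n E →
        ∀ x : 𝒲, x ≠ 0 → x ∈ ctx.fspan (Eacc ∪ E) →
        ∀ Y : Set 𝒲, ctx.IsBlockSubspaceOf Y X →
        ∀ ξ : Ordinal, ∀ hξ : ξ < α,
          ∃ F : Set 𝒲, ctx.IsFinDimIn F Y ∧
            ∃ y : 𝒲, y ≠ 0 ∧ y ∈ ctx.fspan (Facc ∪ F) ∧
              (ξ = 0 → vec ++ [x, y] ∈ S) ∧
              (ξ ≠ 0 → ih ξ hξ (ctx.fspan (Eacc ∪ E)) (ctx.fspan (Facc ∪ F))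
                (vec ++ [x, y])))

/-- Player II has a strategy in the adversarial game `A^α_X` to play in `S`. -/
noncomputable def IIStratA (X : Set 𝒲) (α : Ordinal) (S : Set (List 𝒲)) : Prop :=
  (α = 0 → ([] : List 𝒲) ∈ S) ∧
  (α ≠ 0 → ctx.IIWinsA X S α (ctx.fspan ∅) (ctx.fspan ∅) [])

/-- Game values of the adversarial game `B^α_X` for player I (who plays the
finite-dimensional subspaces `E_l ⊆ Y_l`, the vectors `x_l`, the integers and the
ordinals). -/
noncomputable def IWinsB (X : Set 𝒲) (S : Set (List 𝒲)) :
    Ordinal → Set 𝒲 → Set 𝒲 → List 𝒲 → Prop :=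
  WellFounded.fix (C := fun _ : Ordinal => Set 𝒲 → Set 𝒲 → List 𝒲 → Prop)
    Ordinal.lt_wf
    (fun α ih Eacc Facc vec =>
      ∀ Y : Set 𝒲, ctx.IsBlockSubspaceOf Y X →
        ∃ E : Set 𝒲, ctx.IsFinDimIn E Y ∧
          ∃ x : 𝒲, x ≠ 0 ∧ x ∈ ctx.fspan (Eacc ∪ E) ∧
            ∃ n : ℕ, ∃ ξ : Ordinal, ∃ hξ : ξ < α,
              ∀ F : Set 𝒲, ctx.IsFinDimIn F X → ctx.NatLt n F →
              ∀ y : 𝒲, y ≠ 0 → y ∈ ctx.fspan (Facc ∪ F) →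
                (ξ = 0 → vec ++ [x, y] ∈ S) ∧
                (ξ ≠ 0 → ih ξ hξ (ctx.fspan (Eacc ∪ E)) (ctx.fspan (Facc ∪ F))
                  (vec ++ [x, y])))

/-- Player I has a strategy in the adversarial game `B^α_X` to play in `S`. -/
noncomputable def IStratB (X : Set 𝒲) (α : Ordinal) (S : Set (List 𝒲)) : Prop :=
  (α = 0 → ([] : List 𝒲) ∈ S) ∧
  (α ≠ 0 → ctx.IWinsB X S α (ctx.fspan ∅) (ctx.fspan ∅) [])

/-- Game values of the adversarial game `B^α_X` for player II (who plays the block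
subspaces `Y_l`, the finite-dimensional subspaces `F_l` and the vectors `y_l`). -/
noncomputable def IIWinsB (X : Set 𝒲) (S : Set (List 𝒲)) :
    Ordinal → Set 𝒲 → Set 𝒲 → List 𝒲 → Prop :=
  WellFounded.fix (C := fun _ : Ordinal => Set 𝒲 → Set 𝒲 → List 𝒲 → Prop)
    Ordinal.lt_wf
    (fun α ih Eacc Facc vec =>
      ∃ Y : Set 𝒲, ctx.IsBlockSubspaceOf Y X ∧
        ∀ E : Set 𝒲, ctx.IsFinDimIn E Y →
        ∀ x : 𝒲, x ≠ 0 → x ∈ ctx.fspan (Eacc ∪ E) →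
        ∀ n : ℕ, ∀ ξ : Ordinal, ∀ hξ : ξ < α,
          ∃ F : Set 𝒲, ctx.IsFinDimIn F X ∧ ctx.NatLt n F ∧
            ∃ y : 𝒲, y ≠ 0 ∧ y ∈ ctx.fspan (Facc ∪ F) ∧
              (ξ = 0 → vec ++ [x, y] ∈ S) ∧
              (ξ ≠ 0 → ih ξ hξ (ctx.fspan (Eacc ∪ E)) (ctx.fspan (Facc ∪ F))
                (vec ++ [x, y])))

/-- Player II has a strategy in the adversarial game `B^α_X` to play in `S`. -/
noncomputable def IIStratB (X : Set 𝒲) (α : Ordinal) (S : Set (List 𝒲)) : Prop :=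
  (α = 0 → ([] : List 𝒲) ∈ S) ∧
  (α ≠ 0 → ctx.IIWinsB X S α (ctx.fspan ∅) (ctx.fspan ∅) [])

end Frame

end Rosendal

namespace Rosendal


namespace Frame

variable {𝒲 : Type} [NormedAddCommGroup 𝒲] [NormedSpace ℝ 𝒲] (ctx : Frame 𝒲)

theorem fspan_eq (S : Set 𝒲) : ctx.fspan S = (Submodule.span ctx.𝔽 S : Set 𝒲) := by
  ext v
  constructor
  · rintro ⟨t, ht, c, hc, rfl⟩
    refine Submodule.sum_mem _ fun w hw => ?_
    exact Submodule.smul_mem _ (⟨c w, hc w⟩ : ctx.𝔽) (Submodule.subset_span (ht hw))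
  · intro hv
    obtain ⟨c, hc, rfl⟩ := Submodule.mem_span_set.1 (SetLike.mem_coe.1 hv)
    exact ⟨c.support, hc, fun w => (c w : ℝ), fun w => (c w).2, rfl⟩

theorem fspan_subset {S : Set 𝒲} {X : Set 𝒲} (hX : ctx.IsBlockSubspace X) (h : S ⊆ X) :
    ctx.fspan S ⊆ X := by
  obtain ⟨x, -, -, rfl⟩ := hX
  rw [fspan_eq] at h ⊢
  rw [fspan_eq]
  exact Submodule.span_le.2 h

theorem linInd : LinearIndependent ℝ ctx.e := by
  classical
  rw [linearIndependent_iff']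
  intro s g hg i hi
  obtain ⟨a, -, hu⟩ := ctx.basis 0
  have h0 : (0 : ℕ → ℝ) = a := hu _ (by simp)
  have h1 : (fun i => if i ∈ s then g i else 0) = a := by
    apply hu
    obtain ⟨M, hM⟩ := s.exists_nat_subset_range
    refine tendsto_const_nhds.congr' ?_
    filter_upwards [Filter.eventually_ge_atTop M] with N hN
    have hs : s ⊆ Finset.range N := hM.trans (Finset.range_mono hN)
    rw [← hg]
    symm
    rw [← Finset.sum_subset hs]
    · exact Finset.sum_congr rfl fun j hj => by simp [hj]
    · intro j _ hj
      simp [hj]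
  have := congrFun (h1.trans h0.symm) i
  simpa [hi] using this

theorem suppIn_mem {x : 𝒲} {s : Finset ℕ} (h : SuppIn ctx.e x s) {A : Set ℕ}
    (hA : ∀ i ∈ s, i ∈ A) : x ∈ Submodule.span ℝ (ctx.e '' A) := by
  obtain ⟨a, rfl⟩ := h
  exact Submodule.sum_mem _ fun i hi =>
    Submodule.smul_mem _ _ (Submodule.subset_span ⟨i, hA i hi, rfl⟩)

theorem supp_facts {y : ℕ → 𝒲} (hy : ctx.IsBlockSeq y) :
    ∃ D : ℕ → Finset ℕ, (∀ n, SuppIn ctx.e (y n) (D n)) ∧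
      (∀ n, (D n).Nonempty) ∧ (∀ m n, m < n → ∀ i ∈ D m, ∀ j ∈ D n, i < j) ∧
      ∀ n, ∀ i ∈ D n, n ≤ i := by
  obtain ⟨-, h0, D, hD, hlt⟩ := hy
  have hne : ∀ n, (D n).Nonempty := by
    intro n
    rw [Finset.nonempty_iff_ne_empty]
    intro h
    obtain ⟨a, ha⟩ := hD n
    rw [h] at ha
    exact h0 n (by simpa using ha)
  refine ⟨D, hD, hne, ?_, ?_⟩
  · intro m n hmn
    induction n, hmn using Nat.le_induction with
    | base => exact hlt m
    | succ n _ ih =>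
      intro i hi j hj
      obtain ⟨k, hk⟩ := hne n
      exact (ih i hi k hk).trans (hlt n k hk j hj)
  · intro n
    induction n with
    | zero => intro i _; exact Nat.zero_le i
    | succ n ih =>
      intro i hi
      obtain ⟨k, hk⟩ := hne n
      have := ih k hk
      have := hlt n k hk i hi
      omega

theorem key {X : Set 𝒲} (hX : ctx.IsBlockSubspace X)
    {y : ℕ → 𝒲} (hy : ctx.IsBlockSeq y) (hstar : ∀ᶠ n in Filter.atTop, y n ∈ X) :
    ∃ n0 : ℕ, ∀ v ∈ ctx.fspan (Set.range y),
      (∃ s : Finset ℕ, SuppIn ctx.e v s ∧ ∀ i ∈ s, n0 < i) → v ∈ X := by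
  classical
  obtain ⟨D, hD, hne, hlt, -⟩ := ctx.supp_facts hy
  obtain ⟨N, hN⟩ := Filter.eventually_atTop.1 hstar
  have hmax := (D N).max'_mem (hne N)
  refine ⟨(D N).max' (hne N), ?_⟩
  generalize hn0 : (D N).max' (hne N) = n0 at hmax
  rintro v hv ⟨s, hs, hsn⟩
  have hvs : v ∈ Submodule.span ℝ (ctx.e '' {i | n0 < i}) := ctx.suppIn_mem hs hsn
  rw [fspan_eq] at hv
  obtain ⟨c, rfl⟩ := (Finsupp.mem_span_range_iff_exists_finsupp).1 (SetLike.mem_coe.1 hv)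
  rw [Finsupp.sum, ← Finset.sum_filter_add_sum_filter_not c.support (fun i => i ≤ N)] at hvs ⊢
  set A := ∑ i ∈ c.support with i ≤ N, c i • y i with hA
  set B := ∑ i ∈ c.support with ¬ i ≤ N, c i • y i with hB
  have hBs : B ∈ Submodule.span ℝ (ctx.e '' {i | n0 < i}) := by
    refine Submodule.sum_mem _ fun i hi => ?_
    have hi' : N < i := by simpa using (Finset.mem_filter.1 hi).2
    exact Submodule.smul_mem _ (c i : ℝ)
      (ctx.suppIn_mem (hD i) fun j hj => hlt N i hi' n0 hmax j hj)
  have hAs : A ∈ Submodule.span ℝ (ctx.e '' {i | i ≤ n0}) := by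
    refine Submodule.sum_mem _ fun i hi => ?_
    have hi' : i ≤ N := (Finset.mem_filter.1 hi).2
    refine Submodule.smul_mem _ (c i : ℝ) (ctx.suppIn_mem (hD i) fun j hj => ?_)
    rcases hi'.lt_or_eq with h | h
    · exact (hlt i N h j hj n0 hmax).le
    · subst h
      rw [← hn0]
      exact Finset.le_max' _ _ hj
  have hAs' : A ∈ Submodule.span ℝ (ctx.e '' {i | n0 < i}) := by
    simpa using Submodule.sub_mem _ hvs hBs
  have hdis : Disjoint {i | i ≤ n0} {i | n0 < i} := by
    rw [Set.disjoint_left]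
    intro i hi hi'
    simp only [Set.mem_setOf_eq] at hi hi'
    omega
  have hA0 : A = 0 :=
    Submodule.disjoint_def.1 (ctx.linInd.disjoint_span_image hdis) A hAs hAs'
  rw [hA0, zero_add]
  have hBX : B ∈ ctx.fspan X := by
    rw [fspan_eq]
    refine Submodule.sum_mem _ fun i hi => ?_
    have hi' : N < i := by simpa using (Finset.mem_filter.1 hi).2
    exact Submodule.smul_mem _ _ (Submodule.subset_span (hN i hi'.le))
  exact ctx.fspan_subset hX subset_rfl hBX

theorem tail_block {X Y Z : Set 𝒲} {n0 : ℕ}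
    (hk : ∀ v ∈ Y, (∃ s : Finset ℕ, SuppIn ctx.e v s ∧ ∀ i ∈ s, n0 < i) → v ∈ X)
    (hZ : ctx.IsBlockSubspaceOf Z Y) : ∃ Z', ctx.IsBlockSubspaceOf Z' X ∧ Z' ⊆ Z := by
  obtain ⟨z, hz, hzY, rfl⟩ := hZ
  obtain ⟨D, hD, hne, hlt, hle⟩ := ctx.supp_facts hz
  refine ⟨ctx.fspan (Set.range fun n => z (n + (n0 + 1))),
    ⟨fun n => z (n + (n0 + 1)), ⟨fun n => hz.1 _, fun n => hz.2.1 _,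
      fun n => D (n + (n0 + 1)), fun n => hD _, fun n => hlt _ _ (by omega)⟩, ?_, rfl⟩, ?_⟩
  · intro n
    refine hk _ (hzY _) ⟨_, hD _, fun i hi => ?_⟩
    have := hle _ i hi
    omega
  · rw [fspan_eq, fspan_eq]
    apply Submodule.span_mono
    rintro _ ⟨n, rfl⟩
    exact ⟨_, rfl⟩

theorem IIWinsG_mono {X Y : Set 𝒲} {n0 : ℕ} (T : Set (List 𝒲))
    (hk : ∀ v ∈ Y, (∃ s : Finset ℕ, SuppIn ctx.e v s ∧ ∀ i ∈ s, n0 < i) → v ∈ X)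
    (α : Ordinal) : ∀ (Facc : Set 𝒲) (vec : List 𝒲),
      ctx.IIWinsG X T α Facc vec → ctx.IIWinsG Y T α Facc vec := by
  induction α using WellFoundedLT.induction with
  | ind α ih =>
    intro Facc vec h
    rw [IIWinsG, WellFounded.fix_eq] at h ⊢
    intro Z hZ ξ hξ
    obtain ⟨Z', hZ', hsub⟩ := ctx.tail_block hk hZ
    obtain ⟨F, ⟨t, ht, hF⟩, x, hx0, hx, h1, h2⟩ := h Z' hZ' ξ hξ
    exact ⟨F, ⟨t, ht.trans hsub, hF⟩, x, hx0, hx, h1, fun h0 => ih ξ hξ _ _ (h2 h0)⟩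

theorem IWinsF_mono {X Y : Set 𝒲} {n0 : ℕ} (T : Set (List 𝒲))
    (hk : ∀ v ∈ Y, (∃ s : Finset ℕ, SuppIn ctx.e v s ∧ ∀ i ∈ s, n0 < i) → v ∈ X)
    (α : Ordinal) : ∀ (Facc : Set 𝒲) (vec : List 𝒲),
      ctx.IWinsF X T α Facc vec → ctx.IWinsF Y T α Facc vec := by
  induction α using WellFoundedLT.induction with
  | ind α ih =>
    intro Facc vec h
    rw [IWinsF, WellFounded.fix_eq] at h ⊢
    obtain ⟨n, ξ, hξ, h⟩ := h
    refine ⟨max n n0, ξ, hξ, ?_⟩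
    rintro F ⟨t, ht, hF⟩ hn x hx0 hx
    have htF : (t : Set 𝒲) ⊆ F := by
      rw [hF, fspan_eq]
      exact Submodule.subset_span
    have hFX : ctx.IsFinDimIn F X := by
      refine ⟨t, fun v hv => hk v (ht hv) ?_, hF⟩
      obtain ⟨s, hs, hsn⟩ := hn v (htF hv)
      exact ⟨s, hs, fun i hi => lt_of_le_of_lt (le_max_right _ _) (hsn i hi)⟩
    have hFn : ctx.NatLt n F := by
      intro v hv
      obtain ⟨s, hs, hsn⟩ := hn v hv
      exact ⟨s, hs, fun i hi => lt_of_le_of_lt (le_max_left _ _) (hsn i hi)⟩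
    obtain ⟨h1, h2⟩ := h F hFX hFn x hx0 hx
    exact ⟨h1, fun h0 => ih ξ hξ _ _ (h2 h0)⟩

end Frame

/-- Suppose `Y ⊆* X`, i.e. `Y` is spanned by a block sequence `(y n)`
all but finitely many of whose terms lie in `X`.  Then (1) if II has a strategy in the
Gowers game `G^α_X` to play in `T`, II also has one in `G^α_Y`; and (2) if I has a
strategy in the asymptotic game `F^α_X` to play in `T`, I also has one in `F^α_Y`. -/
theorem strategies_pass_to_almost_subspaces
    (𝒲 : Type) [NormedAddCommGroup 𝒲] [NormedSpace ℝ 𝒲] (ctx : Frame 𝒲)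
    (T : Set (List 𝒲)) (α : Ordinal) (hα : α < (Cardinal.aleph 1).ord)
    (X Y : Set 𝒲) (hX : ctx.IsBlockSubspace X)
    (y : ℕ → 𝒲) (hy : ctx.IsBlockSeq y) (hY : Y = ctx.fspan (Set.range y))
    (hstar : ∀ᶠ n in Filter.atTop, y n ∈ X) :
    (ctx.IIStratG X α T → ctx.IIStratG Y α T) ∧
    (ctx.IStratF X α T → ctx.IStratF Y α T) := by
  obtain ⟨n0, hk⟩ := ctx.key hX hy hstar
  rw [← hY] at hk
  exact ⟨fun h => ⟨h.1, fun h0 => ctx.IIWinsG_mono T hk α _ _ (h.2 h0)⟩,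
    fun h => ⟨h.1, fun h0 => ctx.IWinsF_mono T hk α _ _ (h.2 h0)⟩⟩

end Rosendal
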